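/- arXiv:math-ph/0306059 — 2 statements merged into one kernel-verified Lean document; each statement's English description precedes it below -/
import Mathlib

section
/- (First fundamental theorem for the orthogonal group, endomorphism form.) Let n ≥ 1 and d ≥ 1, and let V = ℂ^n. Every ℂ-linear endomorphism of V^{⊗d} commuting with u^{⊗d} for every u ∈ O(n) is a ℂ-linear combination of the operators J_τ, where τ runs over the partitions of {1, …, 2d} into pairs. -/
open scoped TensorProduct

/-- The operator `J_τ` on `(ℂ^n)^{⊗d}` associated to a partition `τ` of `{1, …, 2d}`
into pairs (encoded as a fixed-point-free involution). Under the identification of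
`End((ℂ^n)^{⊗d})` with `(ℂ^n)^{⊗2d}` given by the standard bilinear form
`⟨·,·⟩` (in which `v₁ ⊗ ⋯ ⊗ v_{2d}` sends `w₁ ⊗ ⋯ ⊗ w_d` to
`(∏ i, ⟨v_i, w_i⟩) · v_{d+1} ⊗ ⋯ ⊗ v_{2d}`), it corresponds to
`∑_{i : Fin 2d → Fin n} (∏_{{k,l} ∈ τ} ⟨e_{i k}, e_{i l}⟩) · e_{i 1} ⊗ ⋯ ⊗ e_{i 2d}`. -/
noncomputable def pairingMap (n d : ℕ) (τ : Equiv.Perm (Fin (2 * d))) :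
    (⨂[ℂ] _ : Fin d, (Fin n → ℂ)) →ₗ[ℂ] ⨂[ℂ] _ : Fin d, (Fin n → ℂ) :=
  ∑ i : Fin (2 * d) → Fin n,
    (∏ k ∈ Finset.univ.filter fun k : Fin (2 * d) => k < τ k,
        (if i k = i (τ k) then (1 : ℂ) else 0)) •
      LinearMap.smulRight
        (PiTensorProduct.lift
          ((MultilinearMap.mkPiAlgebra ℂ (Fin d) ℂ).compLinearMap fun j =>
            LinearMap.proj (i (⟨(j : ℕ), by have := j.isLt; omega⟩ : Fin (2 * d)))))
        (PiTensorProduct.tprod ℂ fun j : Fin d =>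
          Pi.single (i (⟨d + (j : ℕ), by have := j.isLt; omega⟩ : Fin (2 * d))) (1 : ℂ))

/-!
Contracting with the bilinear form turns an endomorphism commuting with `O(n)` into an invariant
tensor, and `J_τ` into the tensor `δ_τ` with coordinates `∏_{{k, l} ∈ τ} δ_{i_k i_l}`. Split an
invariant tensor as `y + z` with `y` in the span of the `δ_τ` and `z` orthogonal to it; then `z` is
again invariant, and it has to vanish. Indeed consider `Q(G) = ⟪z, G^{⊗} z⟫` for real `n × n`
matrices `G`. If `G = u P` is a polar decomposition, then invariance of `z` absorbs `u`, so that
`Q(G) = ⟪z, P^{⊗} z⟫ ≥ 0`, and by density `Q ≥ 0` everywhere. When the entries of `G` are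
independent standard Gaussians, Isserlis' formula says `𝔼 G^{⊗} = ∑_τ δ_τ δ_τᵀ`, hence
`𝔼 Q(G) = ∑_τ |⟪δ_τ, z⟫|² = 0`. A nonnegative continuous function with zero Gaussian mean vanishes
identically, and `Q(1) = |z|²`.
-/

open MeasureTheory ProbabilityTheory
open scoped Matrix ComplexOrder NNReal

section Pairings

variable {κ : Type*} [Fintype κ] [DecidableEq κ]

/-- The pairings (perfect matchings) of a finite set `S`, encoded as the involutions of the ambient
type with support `S`: elements outside `S` are fixed. -/
def pairings (S : Finset κ) : Finset (Equiv.Perm κ) :=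
  {τ | τ * τ = 1 ∧ τ.support = S}

lemma mem_pairings {S : Finset κ} {τ : Equiv.Perm κ} :
    τ ∈ pairings S ↔ (∀ k, τ (τ k) = k) ∧ ∀ k, τ k ≠ k ↔ k ∈ S := by
  simp [pairings, Equiv.Perm.ext_iff, Finset.ext_iff]

lemma mem_pairings_univ {τ : Equiv.Perm κ} :
    τ ∈ pairings Finset.univ ↔ τ * τ = 1 ∧ ∀ k, τ k ≠ k := by
  simp [pairings, Finset.ext_iff]

lemma pairings_empty : pairings (∅ : Finset κ) = {1} := by
  ext τ
  simp +contextual [pairings]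

lemma mul_swap_mem_pairings_insert {S : Finset κ} {k l : κ} (hk : k ∉ S) (hl : l ∈ S)
    {τ : Equiv.Perm κ} (hτ : τ ∈ pairings (S.erase l)) :
    τ * Equiv.swap k l ∈ pairings (insert k S) := by
  simp only [mem_pairings, Equiv.Perm.mul_apply, Finset.mem_erase, Finset.mem_insert,
    Equiv.swap_apply_def] at hτ ⊢
  grind

lemma mul_swap_mem_pairings_erase {S : Finset κ} {k : κ} (hk : k ∉ S)
    {τ : Equiv.Perm κ} (hτ : τ ∈ pairings (insert k S)) :
    τ * Equiv.swap k (τ k) ∈ pairings (S.erase (τ k)) := by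
  simp only [mem_pairings, Equiv.Perm.mul_apply, Finset.mem_erase, Finset.mem_insert,
    Equiv.swap_apply_def] at hτ ⊢
  grind

lemma apply_mem_of_mem_pairings_insert {S : Finset κ} {k : κ} {τ : Equiv.Perm κ}
    (hτ : τ ∈ pairings (insert k S)) : τ k ∈ S := by
  simp only [mem_pairings, Finset.mem_insert] at hτ
  grind

lemma apply_eq_self_of_mem_pairings {S : Finset κ} {τ : Equiv.Perm κ} (hτ : τ ∈ pairings S)
    {k : κ} (hk : k ∉ S) : τ k = k := by
  simp only [mem_pairings] at hτ
  grind

lemma sum_pairings_insert {M : Type*} [AddCommMonoid M] {S : Finset κ} {k : κ} (hk : k ∉ S)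
    (F : Equiv.Perm κ → M) :
    ∑ τ ∈ pairings (insert k S), F τ
      = ∑ l ∈ S, ∑ τ ∈ pairings (S.erase l), F (τ * Equiv.swap k l) := by
  rw [Finset.sum_sigma']
  refine Finset.sum_bij' (fun τ _ ↦ ⟨τ k, τ * Equiv.swap k (τ k)⟩)
    (fun p _ ↦ p.2 * Equiv.swap k p.1) ?_ ?_ ?_ ?_ ?_
  · intro τ hτ
    exact Finset.mem_sigma.2
      ⟨apply_mem_of_mem_pairings_insert hτ, mul_swap_mem_pairings_erase hk hτ⟩
  · intro p hp
    obtain ⟨hl, hτ⟩ := Finset.mem_sigma.1 hp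
    exact mul_swap_mem_pairings_insert hk hl hτ
  · intro τ _
    simp [mul_assoc]
  · rintro ⟨l, τ⟩ hp
    obtain ⟨-, hτ⟩ := Finset.mem_sigma.1 hp
    have hl : τ l = l := apply_eq_self_of_mem_pairings hτ (Finset.notMem_erase l S)
    simp [hl, mul_assoc]
  · intro τ _
    simp [mul_assoc]

end Pairings

section PairingTensor

variable {κ ι R : Type*} [Fintype κ] [DecidableEq ι] [CommSemiring R]

/-- The tensor `δ_τ` of a pairing `τ`, given by its coordinates `∏_{{k, l} ∈ τ} δ_{i_k i_l}`: the
product is `1` exactly when the multi-index `i` is constant on the orbits of `τ`. -/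
def pairingTensor (R : Type*) [CommSemiring R] (τ : Equiv.Perm κ) (i : κ → ι) : R :=
  if i ∘ τ = i then 1 else 0

lemma map_pairingTensor {S : Type*} [CommSemiring S] (f : R →+* S)
    (τ : Equiv.Perm κ) (i : κ → ι) : f (pairingTensor R τ i) = pairingTensor S τ i := by
  simp [pairingTensor, apply_ite f]

lemma star_pairingTensor [StarRing R] (τ : Equiv.Perm κ) :
    star (pairingTensor R τ : (κ → ι) → R) = pairingTensor R τ := by
  ext i
  exact map_pairingTensor (starRingEnd R) τ i

lemma pairingTensor_mul_swap [DecidableEq κ] {k l : κ} {τ : Equiv.Perm κ} (hk : τ k = k)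
    (hl : τ l = l) (i : κ → ι) :
    pairingTensor R (τ * Equiv.swap k l) i = if i k = i l then pairingTensor R τ i else 0 := by
  have h : i ∘ (τ * Equiv.swap k l : Equiv.Perm κ) = i ↔ i k = i l ∧ i ∘ τ = i := by
    simp only [funext_iff, Function.comp_apply, Equiv.Perm.mul_apply, Equiv.swap_apply_def]
    grind
  simp only [pairingTensor, h, ite_and]

lemma prod_boole_eq_pairingTensor [LinearOrder κ] {τ : Equiv.Perm κ} (hτ : τ * τ = 1)
    (i : κ → ι) :
    (∏ k with k < τ k, if i k = i (τ k) then (1 : R) else 0) = pairingTensor R τ i := by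
  have h : (∀ k ∈ ({k | k < τ k} : Finset κ), i k = i (τ k)) ↔ i ∘ τ = i := by
    have hττ (k : κ) : τ (τ k) = k := DFunLike.congr_fun hτ k
    simp only [Finset.mem_filter_univ, funext_iff, Function.comp_apply]
    refine ⟨fun h k ↦ ?_, fun h k _ ↦ (h k).symm⟩
    rcases lt_trichotomy k (τ k) with hk | hk | hk
    · exact (h k hk).symm
    · rw [← hk]
    · simpa only [hττ] using h (τ k) (by rwa [hττ])
  simp only [Finset.prod_boole, h, pairingTensor]

lemma pairingTensor_prodMk {ι' : Type*} [DecidableEq ι'] (τ : Equiv.Perm κ) (i : κ → ι)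
    (j : κ → ι') :
    pairingTensor R τ (fun k ↦ (i k, j k)) = pairingTensor R τ i * pairingTensor R τ j := by
  have h : (fun k ↦ (i k, j k)) ∘ τ = (fun k ↦ (i k, j k)) ↔ i ∘ τ = i ∧ j ∘ τ = j := by
    simp [funext_iff, forall_and]
  simp only [pairingTensor, h, ite_and, ite_zero_mul, one_mul]

end PairingTensor

section Gaussian

lemma integrable_pow_gaussianReal (μ : ℝ) (v : ℝ≥0) (k : ℕ) :
    Integrable (fun x : ℝ ↦ x ^ k) (gaussianReal μ v) := by
  have h := (memLp_id_gaussianReal (μ := μ) (v := v) k).integrable_norm_pow'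
  exact h.mono' (by fun_prop) (by simp)

lemma integrable_pow_mul_gaussianPDFReal (μ : ℝ) {v : ℝ≥0} (hv : v ≠ 0) (k : ℕ) :
    Integrable fun x : ℝ ↦ x ^ k * gaussianPDFReal μ v x := by
  have h := integrable_pow_gaussianReal μ v k
  rw [gaussianReal_of_var_ne_zero _ hv,
    integrable_withDensity_iff (measurable_gaussianPDF μ v) (by simp [gaussianPDF])] at h
  simpa using h

lemma hasDerivAt_gaussianPDFReal (μ : ℝ) (v : ℝ≥0) (x : ℝ) :
    HasDerivAt (gaussianPDFReal μ v) (-((x - μ) / v) * gaussianPDFReal μ v x) x := by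
  have hexponent : HasDerivAt (fun y : ℝ ↦ -(y - μ) ^ 2 / (2 * v)) (-((x - μ) / v)) x := by
    refine ((((hasDerivAt_id x).sub_const μ).pow 2).neg.div_const (2 * v)).congr_deriv ?_
    simp only [id_eq]
    ring
  rw [gaussianPDFReal_def]
  exact (hexponent.exp.const_mul _).congr_deriv (by ring)

lemma integral_pow_succ_gaussianReal (μ : ℝ) {v : ℝ≥0} (hv : v ≠ 0) (k : ℕ) :
    ∫ x, x ^ (k + 1) ∂gaussianReal μ v
      = μ * ∫ x, x ^ k ∂gaussianReal μ v + k * v * ∫ x, x ^ (k - 1) ∂gaussianReal μ v := by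
  have hderiv (x : ℝ) : HasDerivAt (fun x ↦ v * (x ^ k * gaussianPDFReal μ v x))
      (μ * (x ^ k * gaussianPDFReal μ v x) + k * v * (x ^ (k - 1) * gaussianPDFReal μ v x)
        - x ^ (k + 1) * gaussianPDFReal μ v x) x :=
    (((hasDerivAt_pow k x).mul (hasDerivAt_gaussianPDFReal μ v x)).const_mul _).congr_deriv
      (by field_simp; ring)
  have hint := integrable_pow_mul_gaussianPDFReal μ hv
  have hadd : Integrable fun x ↦
      μ * (x ^ k * gaussianPDFReal μ v x) + k * v * (x ^ (k - 1) * gaussianPDFReal μ v x) :=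
    ((hint k).const_mul μ).add ((hint (k - 1)).const_mul (k * v))
  have hzero := integral_eq_zero_of_hasDerivAt_of_integrable hderiv (hadd.sub (hint (k + 1)))
    ((hint k).const_mul _)
  rw [integral_sub hadd (hint (k + 1)),
    integral_add ((hint k).const_mul μ) ((hint (k - 1)).const_mul (k * v)),
    integral_const_mul, integral_const_mul, sub_eq_zero] at hzero
  simpa only [integral_gaussianReal_eq_integral_smul hv, smul_eq_mul,
    mul_comm (gaussianPDFReal _ _ _)] using hzero.symm

variable {α κ : Type*} [Fintype α]

/-- The standard Gaussian measure on `ℝ^α`: independent standard normal coordinates. -/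
noncomputable def stdNormal (α : Type*) [Fintype α] : Measure (α → ℝ) :=
  Measure.pi fun _ ↦ gaussianReal 0 1

instance isOpenPosMeasure_stdNormal : (stdNormal α).IsOpenPosMeasure := by
  have : (gaussianReal 0 1).IsOpenPosMeasure :=
    (gaussianReal_absolutelyContinuous' 0 one_ne_zero).isOpenPosMeasure
  exact inferInstanceAs (Measure.pi fun _ ↦ gaussianReal 0 1).IsOpenPosMeasure

lemma prod_apply_eq_prod_pow_card [DecidableEq α] (S : Finset κ) (a : κ → α) (x : α → ℝ) :
    ∏ k ∈ S, x (a k) = ∏ b, x b ^ ({k ∈ S | a k = b} : Finset κ).card := by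
  rw [← Finset.prod_fiberwise S a]
  exact Finset.prod_congr rfl fun b _ ↦ Finset.prod_eq_pow_card fun k hk ↦ by
    rw [(Finset.mem_filter.1 hk).2]

lemma integrable_prod_apply_stdNormal (S : Finset κ) (a : κ → α) :
    Integrable (fun x ↦ ∏ k ∈ S, x (a k)) (stdNormal α) := by
  classical
  simp only [prod_apply_eq_prod_pow_card]
  exact Integrable.fintype_prod
    (f := fun b (y : ℝ) ↦ y ^ ({k ∈ S | a k = b} : Finset κ).card)
    fun _ ↦ integrable_pow_gaussianReal 0 1 _

variable [DecidableEq α]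

lemma integral_prod_apply_stdNormal (S : Finset κ) (a : κ → α) :
    ∫ x, ∏ k ∈ S, x (a k) ∂stdNormal α
      = ∏ b, ∫ y, y ^ ({k ∈ S | a k = b} : Finset κ).card ∂gaussianReal 0 1 := by
  simp only [prod_apply_eq_prod_pow_card]
  exact integral_fintype_prod_eq_prod
    fun b (y : ℝ) ↦ y ^ ({k ∈ S | a k = b} : Finset κ).card

variable [DecidableEq κ]

lemma integral_prod_insert_stdNormal {S : Finset κ} {k : κ} (hk : k ∉ S) (a : κ → α) :
    ∫ x, ∏ l ∈ insert k S, x (a l) ∂stdNormal α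
      = ∑ l ∈ S, if a k = a l then ∫ x, ∏ m ∈ S.erase l, x (a m) ∂stdNormal α else 0 := by
  let moment (c : ℕ) : ℝ := ∫ y, y ^ c ∂gaussianReal 0 1
  let fiberCard (b : α) (S : Finset κ) : ℕ := ({l ∈ S | a l = b} : Finset κ).card
  let rest : ℝ := ∏ b ∈ Finset.univ.erase (a k), moment (fiberCard b S)
  have split (S' : Finset κ) : ∫ x, ∏ l ∈ S', x (a l) ∂stdNormal α = moment (fiberCard (a k) S') *
      ∏ b ∈ Finset.univ.erase (a k), moment (fiberCard b S') :=
    (integral_prod_apply_stdNormal S' a).trans (Finset.mul_prod_erase _ _ (Finset.mem_univ _)).symm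
  have hinsert : ∫ x, ∏ l ∈ insert k S, x (a l) ∂stdNormal α
      = moment (fiberCard (a k) S + 1) * rest := by
    rw [split]
    congr 1
    · simp [fiberCard, Finset.filter_insert, hk]
    · refine Finset.prod_congr rfl fun b hb ↦ ?_
      simp [fiberCard, Finset.filter_insert, (Finset.ne_of_mem_erase hb).symm]
  have herase {l : κ} (hl : l ∈ S) (hkl : a k = a l) :
      ∫ x, ∏ m ∈ S.erase l, x (a m) ∂stdNormal α = moment (fiberCard (a k) S - 1) * rest := by
    rw [split]
    congr 1
    · simp [fiberCard, Finset.filter_erase, hl, hkl]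
    · refine Finset.prod_congr rfl fun b hb ↦ ?_
      have hlb : a l ≠ b := hkl ▸ (Finset.ne_of_mem_erase hb).symm
      simp [fiberCard, Finset.filter_erase, hlb]
  have hcard : ({l ∈ S | a k = a l} : Finset κ).card = fiberCard (a k) S := by
    simp only [fiberCard, eq_comm]
  rw [hinsert, ← Finset.sum_filter, Finset.sum_congr rfl fun l hl ↦
    herase (Finset.mem_filter.1 hl).1 (Finset.mem_filter.1 hl).2, Finset.sum_const, hcard,
    nsmul_eq_mul, ← mul_assoc]
  simp [moment, integral_pow_succ_gaussianReal 0 one_ne_zero]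

/-- Isserlis' (Wick's) formula. -/
theorem integral_prod_eq_sum_pairings [Fintype κ] (S : Finset κ) (a : κ → α) :
    ∫ x, ∏ k ∈ S, x (a k) ∂stdNormal α = ∑ τ ∈ pairings S, pairingTensor ℝ τ a := by
  induction hS : S.card using Nat.strong_induction_on generalizing S with
  | _ N ih =>
  rcases S.eq_empty_or_nonempty with rfl | ⟨k, hkS⟩
  · simp [pairings_empty, pairingTensor, stdNormal, -Finset.sum_boole]
  obtain ⟨S, hk, rfl⟩ : ∃ S', k ∉ S' ∧ insert k S' = S :=
    ⟨S.erase k, S.notMem_erase k, Finset.insert_erase hkS⟩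
  rw [integral_prod_insert_stdNormal hk, sum_pairings_insert hk]
  refine Finset.sum_congr rfl fun l _ ↦ ?_
  have hlt : (S.erase l).card < N := by
    rw [← hS, Finset.card_insert_of_notMem hk]
    exact Nat.lt_succ_of_le (Finset.card_erase_le)
  have hswap (τ) (hτ : τ ∈ pairings (S.erase l)) : pairingTensor ℝ (τ * Equiv.swap k l) a
      = if a k = a l then pairingTensor ℝ τ a else 0 :=
    pairingTensor_mul_swap
      (apply_eq_self_of_mem_pairings hτ fun h ↦ hk (Finset.mem_of_mem_erase h))
      (apply_eq_self_of_mem_pairings hτ (S.notMem_erase l)) a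
  rw [ih _ hlt _ rfl, Finset.sum_congr rfl hswap]
  split_ifs
  · rfl
  · exact Finset.sum_const_zero.symm

end Gaussian

section KroneckerPower

variable {κ ι R : Type*} [Fintype κ] [CommSemiring R]

/-- The Kronecker power `A^{⊗κ}`: the matrix of the tensor power of `A` in the tensor basis, which
is indexed by `κ → ι`. -/
def kroneckerPower (κ : Type*) [Fintype κ] (A : Matrix ι ι R) : Matrix (κ → ι) (κ → ι) R :=
  Matrix.of fun i j ↦ ∏ k, A (i k) (j k)

lemma kroneckerPower_apply (A : Matrix ι ι R) (i j : κ → ι) :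
    kroneckerPower κ A i j = ∏ k, A (i k) (j k) := rfl

lemma kroneckerPower_mul [Fintype ι] [DecidableEq κ] (A B : Matrix ι ι R) :
    kroneckerPower κ (A * B) = kroneckerPower κ A * kroneckerPower κ B := by
  ext i j
  simp only [Matrix.mul_apply, kroneckerPower_apply, Fintype.prod_sum, Finset.prod_mul_distrib]

lemma kroneckerPower_one [DecidableEq ι] [DecidableEq (κ → ι)] :
    kroneckerPower κ (1 : Matrix ι ι R) = 1 := by
  ext i j
  simp [kroneckerPower_apply, Matrix.one_apply, Fintype.prod_boole, funext_iff]

lemma kroneckerPower_map {S : Type*} [CommSemiring S] (f : R →+* S)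
    (A : Matrix ι ι R) : kroneckerPower κ (A.map f) = (kroneckerPower κ A).map f := by
  ext i j
  simp [kroneckerPower_apply]

lemma kroneckerPower_transpose (A : Matrix ι ι R) :
    kroneckerPower κ Aᵀ = (kroneckerPower κ A)ᵀ := rfl

lemma kroneckerPower_conjTranspose [StarRing R] (A : Matrix ι ι R) :
    kroneckerPower κ Aᴴ = (kroneckerPower κ A)ᴴ := by
  ext i j
  simp [kroneckerPower_apply]

open scoped MatrixOrder in
lemma posSemidef_kroneckerPower {𝕜 : Type*} [RCLike 𝕜] [Finite ι] {A : Matrix ι ι 𝕜}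
    (hA : A.PosSemidef) : (kroneckerPower κ A).PosSemidef := by
  classical
  have := Fintype.ofFinite ι
  obtain ⟨B, rfl⟩ := CStarAlgebra.nonneg_iff_eq_star_mul_self.mp hA.nonneg
  rw [Matrix.star_eq_conjTranspose, kroneckerPower_mul, kroneckerPower_conjTranspose]
  exact Matrix.posSemidef_conjTranspose_mul_self _

end KroneckerPower

section Flatten

variable {κ κ₁ κ₂ ι R : Type*} [CommSemiring R]

/-- The splitting of a multi-index along a decomposition `e` of its slots into two blocks. -/
def splitEquiv (ι : Type*) (e : κ₁ ⊕ κ₂ ≃ κ) : (κ → ι) ≃ (κ₁ → ι) × (κ₂ → ι) :=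
  (e.symm.arrowCongr (Equiv.refl ι)).trans (Equiv.sumArrowEquivProdArrow κ₁ κ₂ ι)

/-- The identification of `Hom(V^{⊗κ₁}, V^{⊗κ₂})` with `V^{⊗κ}` given by the standard bilinear form
on `V = R^ι`, in coordinates: the slots of `κ` in the first block index the columns of a matrix,
those in the second block its rows. -/
def flatten (ι R : Type*) [CommSemiring R] (e : κ₁ ⊕ κ₂ ≃ κ) :
    Matrix (κ₂ → ι) (κ₁ → ι) R ≃ₗ[R] ((κ → ι) → R) where
  toFun A i := A (splitEquiv ι e i).2 (splitEquiv ι e i).1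
  invFun T := Matrix.of fun b a ↦ T ((splitEquiv ι e).symm (a, b))
  map_add' _ _ := rfl
  map_smul' _ _ := rfl
  left_inv A := by ext; simp
  right_inv T := by ext; simp

lemma flatten_apply (e : κ₁ ⊕ κ₂ ≃ κ) (A : Matrix (κ₂ → ι) (κ₁ → ι) R) (i : κ → ι) :
    flatten ι R e A i = A (splitEquiv ι e i).2 (splitEquiv ι e i).1 := rfl

variable [Fintype κ] [Fintype κ₁] [Fintype κ₂]

lemma kroneckerPower_apply_split (e : κ₁ ⊕ κ₂ ≃ κ) (A : Matrix ι ι R) (i j : κ → ι) :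
    kroneckerPower κ A i j
      = kroneckerPower κ₁ A (splitEquiv ι e i).1 (splitEquiv ι e j).1
        * kroneckerPower κ₂ A (splitEquiv ι e i).2 (splitEquiv ι e j).2 := by
  rw [kroneckerPower_apply, ← e.prod_comp, Fintype.prod_sum_type]
  rfl

lemma kroneckerPower_mulVec_flatten [Fintype ι] [DecidableEq κ] [DecidableEq κ₁] [DecidableEq κ₂]
    (e : κ₁ ⊕ κ₂ ≃ κ) (B : Matrix ι ι R) (A : Matrix (κ₂ → ι) (κ₁ → ι) R) :
    kroneckerPower κ B *ᵥ flatten ι R e A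
      = flatten ι R e (kroneckerPower κ₂ B * A * (kroneckerPower κ₁ B)ᵀ) := by
  ext j
  simp only [Matrix.mulVec, dotProduct, kroneckerPower_apply_split e, flatten_apply,
    Matrix.mul_apply, Matrix.transpose_apply, Finset.sum_mul]
  rw [(splitEquiv ι e).sum_comp fun p ↦ kroneckerPower κ₁ B (splitEquiv ι e j).1 p.1
    * kroneckerPower κ₂ B (splitEquiv ι e j).2 p.2 * A p.2 p.1, Fintype.sum_prod_type]
  refine Finset.sum_congr rfl fun a _ ↦ Finset.sum_congr rfl fun b _ ↦ by ring

end Flatten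

section Invariants

lemma exists_sum_equiv_apply_swap {κ : Type*} {τ : Equiv.Perm κ} (hτ : τ * τ = 1)
    (hne : ∀ k, τ k ≠ k) :
    ∃ (p : κ → Prop) (e : {k // p k} ⊕ {k // p k} ≃ κ), ∀ x, τ (e x) = e x.swap := by
  classical
  have hττ (k : κ) : τ (τ k) = k := DFunLike.congr_fun hτ k
  let _ : LinearOrder κ := linearOrderOfSTO WellOrderingRel
  have hiff (k : κ) : k < τ k ↔ ¬ τ k < τ (τ k) := by
    rw [hττ, not_lt]
    exact (Ne.le_iff_lt (hne k).symm).symm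
  let e := (Equiv.sumCongr (Equiv.refl _) (τ.subtypeEquiv hiff)).trans
    (Equiv.sumCompl fun k ↦ k < τ k)
  refine ⟨fun k ↦ k < τ k, e, ?_⟩
  rintro (k | k)
  · rfl
  · exact hττ k

variable {κ ι R : Type*} [Fintype κ] [DecidableEq ι]

lemma pairingTensor_eq_flatten_one [CommSemiring R] {σ : Type*} [DecidableEq (σ → ι)]
    {τ : Equiv.Perm κ} {e : σ ⊕ σ ≃ κ} (he : ∀ x, τ (e x) = e x.swap) :
    pairingTensor R τ = flatten ι R e 1 := by
  ext i
  have h : i ∘ τ = i ↔ (splitEquiv ι e i).2 = (splitEquiv ι e i).1 := by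
    rw [funext_iff, e.surjective.forall, funext_iff]
    simp only [Function.comp_apply, he, Sum.forall, Sum.swap_inl, Sum.swap_inr]
    exact ⟨fun h ↦ h.1, fun h ↦ ⟨h, fun k ↦ (h k).symm⟩⟩
  simp [pairingTensor, flatten_apply, Matrix.one_apply, h]

variable [DecidableEq κ] [Fintype ι]

lemma kroneckerPower_mulVec_pairingTensor [CommSemiring R] {A : Matrix ι ι R} (hA : A * Aᵀ = 1)
    {τ : Equiv.Perm κ} (hτ : τ * τ = 1) (hne : ∀ k, τ k ≠ k) :
    kroneckerPower κ A *ᵥ pairingTensor R τ = pairingTensor R τ := by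
  classical
  obtain ⟨p, e, he⟩ := exists_sum_equiv_apply_swap hτ hne
  rw [pairingTensor_eq_flatten_one he, kroneckerPower_mulVec_flatten, mul_one,
    ← kroneckerPower_transpose, ← kroneckerPower_mul, hA, kroneckerPower_one]

/-- The tensors in `(R^ι)^{⊗κ}`, given by their coordinates, that are fixed by the real orthogonal
group `O(ι)` acting diagonally. -/
def orthogonalInvariants (κ ι R : Type*) [Fintype κ] [DecidableEq κ] [Fintype ι] [DecidableEq ι]
    [CommRing R] [Algebra ℝ R] : Submodule R ((κ → ι) → R) where
  carrier := {T | ∀ u ∈ Matrix.orthogonalGroup ι ℝ,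
    kroneckerPower κ (u.map (algebraMap ℝ R)) *ᵥ T = T}
  zero_mem' _ _ := Matrix.mulVec_zero _
  add_mem' hS hT u hu := by rw [Matrix.mulVec_add, hS u hu, hT u hu]
  smul_mem' c T hT u hu := by rw [Matrix.mulVec_smul, hT u hu]

lemma map_mul_transpose_map_of_mem_orthogonalGroup [CommRing R] [Algebra ℝ R]
    {u : Matrix ι ι ℝ} (hu : u ∈ Matrix.orthogonalGroup ι ℝ) :
    u.map (algebraMap ℝ R) * (u.map (algebraMap ℝ R))ᵀ = 1 := by
  have h : u * uᵀ = 1 := (Matrix.mem_orthogonalGroup_iff ι ℝ).1 hu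
  rw [← Matrix.transpose_map, ← Matrix.map_mul, h]
  simp

lemma pairingTensor_mem_orthogonalInvariants [CommRing R] [Algebra ℝ R] {τ : Equiv.Perm κ}
    (hτ : τ * τ = 1) (hne : ∀ k, τ k ≠ k) :
    pairingTensor R τ ∈ orthogonalInvariants κ ι R := fun _ hu ↦
  kroneckerPower_mulVec_pairingTensor (map_mul_transpose_map_of_mem_orthogonalGroup hu) hτ hne

end Invariants

section Positivity

variable {κ ι 𝕜 : Type*} [RCLike 𝕜]

lemma conjTranspose_map_algebraMap {m n : Type*} (A : Matrix m n ℝ) :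
    Aᴴ.map (algebraMap ℝ 𝕜) = (A.map (algebraMap ℝ 𝕜))ᴴ := by
  ext i j
  simp only [Matrix.map_apply, Matrix.conjTranspose_apply, star_trivial,
    RCLike.algebraMap_eq_ofReal, RCLike.star_def, RCLike.conj_ofReal]

open scoped MatrixOrder in
lemma posSemidef_map_algebraMap [Finite ι] {P : Matrix ι ι ℝ} (hP : P.PosSemidef) :
    (P.map (algebraMap ℝ 𝕜)).PosSemidef := by
  classical
  have := Fintype.ofFinite ι
  obtain ⟨B, rfl⟩ := CStarAlgebra.nonneg_iff_eq_star_mul_self.mp hP.nonneg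
  rw [Matrix.star_eq_conjTranspose, Matrix.map_mul, conjTranspose_map_algebraMap]
  exact Matrix.posSemidef_conjTranspose_mul_self _

open scoped MatrixOrder in
lemma exists_unitary_mul_posSemidef [Fintype ι] [DecidableEq ι] {G : Matrix ι ι 𝕜} (hG : IsUnit G) :
    ∃ u ∈ Matrix.unitaryGroup ι 𝕜, ∃ P : Matrix ι ι 𝕜, P.PosSemidef ∧ G = u * P := by
  set P := CFC.abs G
  have hP : P.PosSemidef := Matrix.nonneg_iff_posSemidef.1 (CFC.abs_nonneg G)
  have hPP : P * P = Gᴴ * G := CFC.abs_mul_abs G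
  have hPunit : IsUnit P := by
    have h : IsUnit (P * P) := hPP ▸ (hG.star.mul hG)
    exact isUnit_of_mul_isUnit_left h
  have hPdet : IsUnit P.det := P.isUnit_iff_isUnit_det.1 hPunit
  refine ⟨G * P⁻¹, Matrix.mem_unitaryGroup_iff'.2 ?_, P, hP, ?_⟩
  · calc star (G * P⁻¹) * (G * P⁻¹) = P⁻¹ * (Gᴴ * G) * P⁻¹ := by
          rw [Matrix.star_eq_conjTranspose, Matrix.conjTranspose_mul,
            hP.isHermitian.inv.eq]
          simp only [mul_assoc]
      _ = 1 := by
          rw [← hPP, ← mul_assoc, Matrix.nonsing_inv_mul _ hPdet, one_mul,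
            Matrix.mul_nonsing_inv _ hPdet]
  · rw [mul_assoc, Matrix.nonsing_inv_mul _ hPdet, mul_one]

lemma dense_isUnit_matrix {K : Type*} [NontriviallyNormedField K] [CompleteSpace K] [Fintype ι]
    [DecidableEq ι] : Dense {G : Matrix ι ι K | IsUnit G} := by
  intro G
  have hdense : Dense (spectrum K G)ᶜ := G.finite_spectrum.countable.dense_compl K
  have hcont : Continuous fun x : K ↦ G - algebraMap K _ x := by fun_prop
  have hmaps : Set.MapsTo (fun x : K ↦ G - algebraMap K _ x) (spectrum K G)ᶜ {G | IsUnit G} := by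
    intro x hx
    simpa using (spectrum.notMem_iff.1 hx).neg
  simpa using map_mem_closure hcont (hdense 0) hmaps

variable [Fintype κ] [DecidableEq κ] [Fintype ι]

/-- The value `⟪T, G^{⊗κ} T⟫` at `T` of the sesquilinear form of `G^{⊗κ}`, for a real matrix `G`. -/
noncomputable def kroneckerForm (T : (κ → ι) → 𝕜) (G : Matrix ι ι ℝ) : 𝕜 :=
  star T ⬝ᵥ (kroneckerPower κ (G.map (algebraMap ℝ 𝕜)) *ᵥ T)

lemma continuous_kroneckerForm (T : (κ → ι) → 𝕜) : Continuous (kroneckerForm T) := by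
  unfold kroneckerForm Matrix.mulVec dotProduct kroneckerPower
  simp only [Matrix.of_apply]
  fun_prop

variable [DecidableEq ι]

lemma kroneckerForm_one (T : (κ → ι) → 𝕜) : kroneckerForm T 1 = star T ⬝ᵥ T := by
  simp [kroneckerForm, kroneckerPower_one]

lemma kroneckerForm_nonneg {T : (κ → ι) → 𝕜} (hT : T ∈ orthogonalInvariants κ ι 𝕜)
    (G : Matrix ι ι ℝ) : 0 ≤ kroneckerForm T G := by
  have hclosed : IsClosed {G : Matrix ι ι ℝ | 0 ≤ kroneckerForm T G} :=
    isClosed_le continuous_const (continuous_kroneckerForm T)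
  refine hclosed.closure_subset_iff.2 ?_ (dense_isUnit_matrix G)
  rintro _ hG
  obtain ⟨u, hu, P, hP, rfl⟩ := exists_unitary_mul_posSemidef hG
  have hfix : star T ᵥ* kroneckerPower κ (u.map (algebraMap ℝ 𝕜)) = star T := by
    have h := congrArg star (hT (star u) (Unitary.star_mem hu))
    rwa [Matrix.star_mulVec, Matrix.star_eq_conjTranspose, conjTranspose_map_algebraMap,
      kroneckerPower_conjTranspose, Matrix.conjTranspose_conjTranspose] at h
  change 0 ≤ kroneckerForm T (u * P)
  rw [kroneckerForm, Matrix.map_mul, kroneckerPower_mul, ← Matrix.mulVec_mulVec,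
    Matrix.dotProduct_mulVec, hfix]
  exact (posSemidef_kroneckerPower (posSemidef_map_algebraMap hP)).dotProduct_mulVec_nonneg T

end Positivity

section GaussianAverage

variable {κ ι 𝕜 : Type*} [Fintype κ] [Fintype ι] [RCLike 𝕜]

lemma integrable_kroneckerPower (i j : κ → ι) :
    Integrable (fun x ↦ kroneckerPower κ (Matrix.of (Function.curry x)) i j)
      (stdNormal (ι × ι)) :=
  integrable_prod_apply_stdNormal Finset.univ fun k ↦ (i k, j k)

variable [DecidableEq κ]

lemma kroneckerForm_eq_sum (T : (κ → ι) → 𝕜) (G : Matrix ι ι ℝ) :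
    kroneckerForm T G
      = ∑ p : (κ → ι) × (κ → ι), star (T p.1) * T p.2 * (kroneckerPower κ G p.1 p.2 : ℝ) := by
  simp only [kroneckerForm, kroneckerPower_map, dotProduct, Matrix.mulVec, Finset.mul_sum,
    Pi.star_apply, Matrix.map_apply, RCLike.algebraMap_eq_ofReal, Fintype.sum_prod_type, mul_assoc,
    mul_comm (T _)]

lemma integrable_kroneckerForm (T : (κ → ι) → 𝕜) :
    Integrable (fun x ↦ kroneckerForm T (Matrix.of (Function.curry x))) (stdNormal (ι × ι)) := by
  simp only [kroneckerForm_eq_sum]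
  exact integrable_finsetSum _ fun p _ ↦ (integrable_kroneckerPower p.1 p.2).ofReal.const_mul _

variable [DecidableEq ι]

lemma integral_kroneckerPower (i j : κ → ι) :
    ∫ x, kroneckerPower κ (Matrix.of (Function.curry x)) i j ∂stdNormal (ι × ι)
      = ∑ τ ∈ pairings (Finset.univ : Finset κ), pairingTensor ℝ τ i * pairingTensor ℝ τ j := by
  simp only [← pairingTensor_prodMk]
  exact integral_prod_eq_sum_pairings Finset.univ fun k ↦ (i k, j k)

lemma integral_kroneckerForm (T : (κ → ι) → 𝕜) :
    ∫ x, kroneckerForm T (Matrix.of (Function.curry x)) ∂stdNormal (ι × ι)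
      = ∑ τ ∈ pairings (Finset.univ : Finset κ),
        (star T ⬝ᵥ pairingTensor 𝕜 τ) * (pairingTensor 𝕜 τ ⬝ᵥ T) := by
  simp only [kroneckerForm_eq_sum]
  rw [integral_finsetSum _ fun p _ ↦ (integrable_kroneckerPower p.1 p.2).ofReal.const_mul _]
  simp only [integral_const_mul, integral_ofReal, integral_kroneckerPower,
    ← RCLike.algebraMap_eq_ofReal, map_sum, map_mul, map_pairingTensor, Finset.mul_sum]
  rw [Finset.sum_comm]
  refine Finset.sum_congr rfl fun τ _ ↦ ?_
  rw [dotProduct, dotProduct, Fintype.sum_mul_sum, ← Fintype.sum_prod_type']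
  exact Finset.sum_congr rfl fun p _ ↦ by rw [Pi.star_apply]; ring

lemma eq_zero_of_mem_orthogonalInvariants {T : (κ → ι) → 𝕜}
    (hT : T ∈ orthogonalInvariants κ ι 𝕜)
    (horth : ∀ τ ∈ pairings (Finset.univ : Finset κ), pairingTensor 𝕜 τ ⬝ᵥ T = 0) : T = 0 := by
  let q (x : ι × ι → ℝ) : ℝ := RCLike.re (kroneckerForm T (Matrix.of (Function.curry x)))
  have hnonneg (x) : 0 ≤ q x := (RCLike.nonneg_iff.1 (kroneckerForm_nonneg hT _)).1
  have hcurry : Continuous fun x : ι × ι → ℝ ↦ Matrix.of (Function.curry x) := by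
    unfold Function.curry
    fun_prop
  have hcont : Continuous q :=
    RCLike.continuous_re.comp ((continuous_kroneckerForm T).comp hcurry)
  have hzero : ∫ x, q x ∂stdNormal (ι × ι) = 0 := by
    rw [integral_re (integrable_kroneckerForm T), integral_kroneckerForm,
      Finset.sum_eq_zero fun τ hτ ↦ by rw [horth τ hτ, mul_zero], map_zero]
  have hq : q = 0 := by
    rw [integral_eq_zero_iff_of_nonneg hnonneg (integrable_kroneckerForm T).re] at hzero
    exact (hcont.ae_eq_iff_eq _ continuous_const).1 hzero
  have hre : RCLike.re (kroneckerForm T 1) = 0 :=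
    congrFun hq (Function.uncurry (1 : Matrix ι ι ℝ))
  have him : RCLike.im (kroneckerForm T 1) = 0 :=
    (RCLike.nonneg_iff.1 (kroneckerForm_nonneg hT 1)).2
  rw [← dotProduct_star_self_eq_zero, ← kroneckerForm_one]
  exact RCLike.ext (by simpa using hre) (by simpa using him)

end GaussianAverage

section TensorForm

variable {κ ι 𝕜 : Type*} [Fintype κ] [DecidableEq κ] [Fintype ι] [DecidableEq ι] [RCLike 𝕜]

lemma exists_mem_add_star_dotProduct_eq_zero {m : Type*} [Fintype m]
    (W : Submodule 𝕜 (m → 𝕜)) (T : m → 𝕜) :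
    ∃ y ∈ W, ∃ z : m → 𝕜, (∀ w ∈ W, star w ⬝ᵥ z = 0) ∧ T = y + z := by
  let e := WithLp.linearEquiv 2 𝕜 (m → 𝕜)
  obtain ⟨y, hy, z, hz, hyz⟩ := (W.comap e.toLinearMap).exists_add_mem_mem_orthogonal (e.symm T)
  refine ⟨e y, hy, e z, fun w hw ↦ ?_, ?_⟩
  · rw [dotProduct_comm]
    exact hz (e.symm w) hw
  · rw [← map_add, ← hyz, e.apply_symm_apply]

theorem orthogonalInvariants_eq_span :
    orthogonalInvariants κ ι 𝕜
      = Submodule.span 𝕜 (pairingTensor 𝕜 '' pairings (Finset.univ : Finset κ)) := by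
  have hspan : Submodule.span 𝕜 (pairingTensor 𝕜 '' pairings (Finset.univ : Finset κ))
      ≤ orthogonalInvariants κ ι 𝕜 := by
    rw [Submodule.span_le, Set.image_subset_iff]
    intro τ hτ
    obtain ⟨hinv, hne⟩ := mem_pairings_univ.1 hτ
    exact pairingTensor_mem_orthogonalInvariants hinv hne
  refine le_antisymm (fun T hT ↦ ?_) hspan
  obtain ⟨y, hy, z, hz, rfl⟩ := exists_mem_add_star_dotProduct_eq_zero
    (Submodule.span 𝕜 (pairingTensor 𝕜 '' pairings (Finset.univ : Finset κ))) T
  have hzinv : z ∈ orthogonalInvariants κ ι 𝕜 :=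
    (Submodule.add_mem_iff_right _ (hspan hy)).1 hT
  have hz0 : z = 0 := eq_zero_of_mem_orthogonalInvariants hzinv fun τ hτ ↦ by
    simpa only [star_pairingTensor] using hz _ (Submodule.subset_span ⟨τ, hτ, rfl⟩)
  rwa [hz0, add_zero]

end TensorForm

section Endomorphisms

variable {κ κ' ι R : Type*} [CommSemiring R]

/-- The standard basis of `(R^ι)^{⊗κ}`. -/
noncomputable def tensorBasis (κ ι R : Type*) [Finite κ] [Finite ι] [CommSemiring R] :
    Module.Basis (κ → ι) R (⨂[R] _ : κ, (ι → R)) :=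
  Basis.piTensorProduct fun _ ↦ Pi.basisFun R ι

lemma tensorBasis_apply [Finite κ] [Finite ι] [DecidableEq ι] (a : κ → ι) :
    tensorBasis κ ι R a = PiTensorProduct.tprod R fun k ↦ Pi.single (a k) 1 := by
  simp only [tensorBasis, Basis.piTensorProduct_apply, Pi.basisFun_apply]

variable [Fintype κ]

lemma tensorBasis_repr_tprod [Finite ι] (v : κ → ι → R) (a : κ → ι) :
    (tensorBasis κ ι R).repr (PiTensorProduct.tprod R v) a = ∏ k, v k (a k) := by
  simp only [tensorBasis, Basis.piTensorProduct_repr_tprod_apply, Pi.basisFun_repr]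

lemma lift_proj_eq_coord [Finite ι] (a : κ → ι) :
    PiTensorProduct.lift ((MultilinearMap.mkPiAlgebra R κ R).compLinearMap fun k ↦
      (LinearMap.proj (a k) : (ι → R) →ₗ[R] R)) = (tensorBasis κ ι R).coord a := by
  classical
  ext v
  simp [tensorBasis_repr_tprod]

variable [DecidableEq κ] [Fintype ι] [DecidableEq ι]

lemma toMatrix_map_mulVecLin (A : Matrix ι ι R) :
    LinearMap.toMatrix (tensorBasis κ ι R) (tensorBasis κ ι R)
      (PiTensorProduct.map fun _ ↦ A.mulVecLin) = kroneckerPower κ A := by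
  ext i j
  simp only [LinearMap.toMatrix_apply, tensorBasis_apply, PiTensorProduct.map_tprod,
    tensorBasis_repr_tprod, Matrix.mulVecLin_apply, Matrix.mulVec_single_one, Matrix.col_apply,
    kroneckerPower_apply]

/-- The identification of `End((R^ι)^{⊗κ})` with `(R^ι)^{⊗κ'}` (in coordinates) given by the
standard bilinear form, where `e` maps the left summand to the input slots and the right summand to
the output slots. -/
noncomputable def endTensor (ι R : Type*) [Fintype ι] [DecidableEq ι] [CommSemiring R]
    (e : κ ⊕ κ ≃ κ') :
    Module.End R (⨂[R] _ : κ, (ι → R)) ≃ₗ[R] ((κ' → ι) → R) :=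
  (LinearMap.toMatrix (tensorBasis κ ι R) (tensorBasis κ ι R)).trans (flatten ι R e)

lemma endTensor_smulRight_coord [DecidableEq (κ' → ι)] (e : κ ⊕ κ ≃ κ') (i : κ' → ι) :
    endTensor ι R e (((tensorBasis κ ι R).coord (splitEquiv ι e i).1).smulRight
      (tensorBasis κ ι R (splitEquiv ι e i).2)) = Pi.single i 1 := by
  ext j
  simp only [endTensor, LinearEquiv.trans_apply, flatten_apply, LinearMap.toMatrix_apply,
    LinearMap.smulRight_apply, Module.Basis.coord_apply, map_smul, Module.Basis.repr_self,
    Finsupp.smul_apply, Finsupp.single_apply, Pi.single_apply, smul_eq_mul, mul_ite, mul_one,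
    mul_zero, ← ite_and]
  congr 1
  rw [← (splitEquiv ι e).injective.eq_iff, Prod.ext_iff, and_comm]
  simp only [eq_comm]

variable [Fintype κ'] [DecidableEq κ']

lemma kroneckerPower_mulVec_endTensor (e : κ ⊕ κ ≃ κ') (A : Matrix ι ι R)
    (f : Module.End R (⨂[R] _ : κ, (ι → R))) :
    kroneckerPower κ' A *ᵥ endTensor ι R e f = endTensor ι R e
      ((PiTensorProduct.map fun _ ↦ A.mulVecLin) ∘ₗ f ∘ₗ
        (PiTensorProduct.map fun _ ↦ Aᵀ.mulVecLin)) := by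
  simp only [endTensor, LinearEquiv.trans_apply, kroneckerPower_mulVec_flatten,
    LinearMap.toMatrix_comp (tensorBasis κ ι R) (tensorBasis κ ι R) (tensorBasis κ ι R),
    toMatrix_map_mulVecLin, kroneckerPower_transpose, mul_assoc]

lemma endTensor_mem_orthogonalInvariants {R : Type*} [CommRing R] [Algebra ℝ R] (e : κ ⊕ κ ≃ κ')
    {f : Module.End R (⨂[R] _ : κ, (ι → R))}
    (hf : ∀ u ∈ Matrix.orthogonalGroup ι ℝ,
      f ∘ₗ PiTensorProduct.map (fun _ ↦ (u.map (algebraMap ℝ R)).mulVecLin)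
        = PiTensorProduct.map (fun _ ↦ (u.map (algebraMap ℝ R)).mulVecLin) ∘ₗ f) :
    endTensor ι R e f ∈ orthogonalInvariants κ' ι R := by
  intro u hu
  have h := map_mul_transpose_map_of_mem_orthogonalGroup (R := R) hu
  rw [kroneckerPower_mulVec_endTensor, ← LinearMap.comp_assoc, ← hf u hu, LinearMap.comp_assoc,
    ← PiTensorProduct.map_comp]
  simp only [← Matrix.mulVecLin_mul, h, Matrix.mulVecLin_one, PiTensorProduct.map_id,
    LinearMap.comp_id]

end Endomorphisms

/-- The slots `1, …, 2d` as `d` input slots followed by `d` output slots. -/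
def slotEquiv (d : ℕ) : Fin d ⊕ Fin d ≃ Fin (2 * d) :=
  finSumFinEquiv.trans (finCongr (two_mul d).symm)

lemma pairingMap_eq_sum (n d : ℕ) {τ : Equiv.Perm (Fin (2 * d))} (hτ : τ * τ = 1) :
    pairingMap n d τ = ∑ i, pairingTensor ℂ τ i •
      ((tensorBasis (Fin d) (Fin n) ℂ).coord (splitEquiv (Fin n) (slotEquiv d) i).1).smulRight
        (tensorBasis (Fin d) (Fin n) ℂ (splitEquiv (Fin n) (slotEquiv d) i).2) := by
  refine Finset.sum_congr rfl fun i _ ↦ ?_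
  rw [prod_boole_eq_pairingTensor hτ, ← lift_proj_eq_coord, tensorBasis_apply]
  rfl

lemma endTensor_pairingMap (n d : ℕ) {τ : Equiv.Perm (Fin (2 * d))} (hτ : τ * τ = 1) :
    endTensor (Fin n) ℂ (slotEquiv d) (pairingMap n d τ) = pairingTensor ℂ τ := by
  simp only [pairingMap_eq_sum n d hτ, map_sum, map_smul, endTensor_smulRight_coord]
  exact (pi_eq_sum_univ' _).symm

/-- **First fundamental theorem for the orthogonal group, endomorphism form.**
Every endomorphism of `(ℂ^n)^{⊗d}` commuting with `u^{⊗d}` for every real orthogonal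
matrix `u ∈ O(n)` is a linear combination of the operators `J_τ`, where `τ` runs over the
partitions of `{1, …, 2d}` into pairs (fixed-point-free involutions). -/
theorem fft_orthogonal_group
    (n d : ℕ) (hn : 1 ≤ n) (hd : 1 ≤ d)
    (f : (⨂[ℂ] _ : Fin d, (Fin n → ℂ)) →ₗ[ℂ] ⨂[ℂ] _ : Fin d, (Fin n → ℂ))
    (hf : ∀ u : Matrix.orthogonalGroup (Fin n) ℝ,
      f ∘ₗ (PiTensorProduct.map fun _ : Fin d =>
          Matrix.mulVecLin ((u : Matrix (Fin n) (Fin n) ℝ).map (Complex.ofReal : ℝ → ℂ)))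
        = (PiTensorProduct.map fun _ : Fin d =>
          Matrix.mulVecLin ((u : Matrix (Fin n) (Fin n) ℝ).map (Complex.ofReal : ℝ → ℂ)))
          ∘ₗ f) :
    f ∈ Submodule.span ℂ
      {J | ∃ τ : Equiv.Perm (Fin (2 * d)),
        τ * τ = 1 ∧ (∀ x, τ x ≠ x) ∧ J = pairingMap n d τ} := by
  let Φ := endTensor (Fin n) ℂ (slotEquiv d)
  have hΦ : Φ f ∈ orthogonalInvariants (Fin (2 * d)) (Fin n) ℂ :=
    endTensor_mem_orthogonalInvariants (slotEquiv d) fun u hu ↦ hf ⟨u, hu⟩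
  rw [orthogonalInvariants_eq_span] at hΦ
  rw [← Φ.symm_apply_apply f, ← Submodule.mem_map_equiv, Submodule.map_span]
  refine Submodule.span_mono ?_ hΦ
  rintro _ ⟨τ, hτ, rfl⟩
  obtain ⟨hinv, hne⟩ := mem_pairings_univ.1 hτ
  exact ⟨pairingMap n d τ, ⟨τ, hinv, hne, rfl⟩, endTensor_pairingMap n d hinv⟩
end

section
/- Let p ≥ 1 and let τ be a fixed-point-free involution of the set {1, …, 2p}. Then there exist a subset S ⊆ {1, …, p} and a permutation σ of {1, …, p} such that, setting θ to be the product of the disjoint transpositions (i, p+i) over all i ∈ S, the involution θ ∘ τ ∘ θ maps i to σ(i) + p for every i ∈ {1, …, p}. -/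
/-- The element `i` of `{1, …, p}` viewed in `{1, …, 2p}` (first half). -/
def loIdx (p : ℕ) (i : Fin p) : Fin (2 * p) :=
  ⟨(i : ℕ), by have := i.isLt; omega⟩

/-- The element `p + i` of `{1, …, 2p}` (second half). -/
def hiIdx (p : ℕ) (i : Fin p) : Fin (2 * p) :=
  ⟨p + (i : ℕ), by have := i.isLt; omega⟩

/-- The product, over `i ∈ S`, of the disjoint transpositions `(i, p+i)` of `{1, …, 2p}`,
as a function: it exchanges `i` and `p + i` for `i ∈ S` and fixes everything else. -/
def swapHalves (p : ℕ) (S : Finset (Fin p)) (x : Fin (2 * p)) : Fin (2 * p) :=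
  if h : (x : ℕ) < p then
    if (⟨(x : ℕ), h⟩ : Fin p) ∈ S then ⟨(x : ℕ) + p, by have := x.isLt; omega⟩ else x
  else
    if (⟨(x : ℕ) - p, by have := x.isLt; omega⟩ : Fin p) ∈ S then
      ⟨(x : ℕ) - p, by have := x.isLt; omega⟩
    else x

/-!
Call `ρ` the involution exchanging `i` and `p + i`. It suffices to colour the points with two
colours so that both `τ` and `ρ` change the colour of every point: then `S` can be taken to be the
set of those `i` whose colour is the wrong one, and `θ` carries the two colour classes onto the two
halves, so that `θ ∘ τ ∘ θ` exchanges the halves.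

Such a colouring exists for any two fixed-point-free involutions `a` and `b`. Every element
`a * (a * b) ^ k` of the dihedral group they generate is conjugate to `a` or to `b`, hence has no
fixed point; so `a` moves every cycle of `a * b` to a different cycle, and it remains to colour the
cycles of `a * b` so that the involution induced by `a` changes colours.
-/

open Equiv Equiv.Perm

section DihedralGroup

variable {G : Type*} [Group G] {a b : G}

theorem conj_mul_eq_inv_of_mul_self_eq_one (ha : a * a = 1) (hb : b * b = 1) :
    a * (a * b) * a⁻¹ = (a * b)⁻¹ := by
  rw [mul_inv_rev, inv_eq_of_mul_eq_one_left hb, ← mul_assoc, ha, one_mul]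

theorem isConj_or_isConj_mul_mul_zpow (ha : a * a = 1) (hb : b * b = 1) (k : ℤ) :
    IsConj a (a * (a * b) ^ k) ∨ IsConj b (a * (a * b) ^ k) := by
  have mul_zpow_comm (m : ℤ) : a * (a * b) ^ m = (a * b) ^ (-m) * a := by
    rw [zpow_neg, ← inv_zpow, ← conj_mul_eq_inv_of_mul_self_eq_one ha hb, conj_zpow,
      inv_mul_cancel_right]
  obtain ⟨m, rfl | rfl⟩ := Int.even_or_odd' k
  · refine .inl (isConj_iff.2 ⟨(a * b) ^ (-m), ?_⟩)
    rw [← mul_zpow_comm, zpow_neg, inv_inv, mul_assoc, ← zpow_add, two_mul]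
  · refine .inr (isConj_iff.2 ⟨(a * b) ^ (-m), ?_⟩)
    calc (a * b) ^ (-m) * b * ((a * b) ^ (-m))⁻¹
        = (a * b) ^ (-m) * (a * a) * b * (a * b) ^ m := by rw [ha, mul_one, zpow_neg, inv_inv]
      _ = a * (a * b) ^ m * (a * b) * (a * b) ^ m := by rw [mul_zpow_comm]; simp only [mul_assoc]
      _ = a * (a * b) ^ (2 * m + 1) := by
        rw [mul_assoc a, ← zpow_add_one, mul_assoc, ← zpow_add]; congr 2; ring

end DihedralGroup

section Coloring

variable {X : Type*}

theorem mem_derangements_of_isConj {f g : Perm X} (h : IsConj f g) (hf : f ∈ derangements X) :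
    g ∈ derangements X := by
  obtain ⟨c, rfl⟩ := isConj_iff.1 h
  intro x hx
  exact hf (c⁻¹ x) (c.eq_symm_apply.2 hx)

theorem not_sameCycle_mul_apply_self {a b : Perm X} (ha : a * a = 1) (hb : b * b = 1)
    (ha' : a ∈ derangements X) (hb' : b ∈ derangements X) (x : X) :
    ¬ (a * b).SameCycle x (a x) := by
  rintro ⟨k, hk⟩
  have hfix : (a * (a * b) ^ k) x = x := by
    rw [mul_apply, hk, ← mul_apply, ha, one_apply]
  obtain h | h := isConj_or_isConj_mul_mul_zpow ha hb k
  · exact mem_derangements_of_isConj h ha' x hfix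
  · exact mem_derangements_of_isConj h hb' x hfix

theorem exists_coloring_of_involutive {f : X → X} (hf : f.Involutive) (hfpf : ∀ x, f x ≠ x) :
    ∃ c : X → Bool, ∀ x, c (f x) = !c x := by
  obtain ⟨_, -⟩ := exists_wellFoundedLT X
  refine ⟨fun x => decide (x < f x), fun x => ?_⟩
  simp only [hf x]
  rw [← decide_not, decide_eq_decide, not_lt]
  exact (hfpf x).le_iff_lt.symm

theorem exists_common_coloring {a b : Perm X} (ha : a * a = 1) (hb : b * b = 1)
    (ha' : a ∈ derangements X) (hb' : b ∈ derangements X) :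
    ∃ c : X → Bool, (∀ x, c (a x) = !c x) ∧ ∀ x, c (b x) = !c x := by
  let cycleSetoid := SameCycle.setoid (a * b)
  have map_sameCycle (x y : X) (h : (a * b).SameCycle x y) : (a * b).SameCycle (a x) (a y) := by
    rw [← sameCycle_inv, ← conj_mul_eq_inv_of_mul_self_eq_one ha hb]
    exact h.conj
  let aOnCycles : Quotient cycleSetoid → Quotient cycleSetoid := Quotient.map a map_sameCycle
  have involutive_aOnCycles : aOnCycles.Involutive :=
    Quotient.ind fun x => congrArg (Quotient.mk _) (Perm.congr_fun ha x)
  have aOnCycles_ne : ∀ q, aOnCycles q ≠ q :=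
    Quotient.ind fun x h =>
      not_sameCycle_mul_apply_self ha hb ha' hb' x (Quotient.exact h).symm
  have mk_b (x : X) : (⟦b x⟧ : Quotient cycleSetoid) = aOnCycles ⟦x⟧ :=
    Quotient.sound ⟨1, congrArg a (Perm.congr_fun hb x)⟩
  obtain ⟨c, hc⟩ := exists_coloring_of_involutive involutive_aOnCycles aOnCycles_ne
  exact ⟨fun x => c ⟦x⟧, fun x => hc ⟦x⟧, fun x => (congrArg c (mk_b x)).trans (hc ⟦x⟧)⟩

end Coloring

section Sum

variable {ι : Type*}

open Classical in
/-- The product of the transpositions `(inl i, inr i)` over `i ∈ S`: the analogue of `swapHalves`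
for two halves indexed by an arbitrary type. -/
noncomputable def swapSides (S : Set ι) (x : ι ⊕ ι) : ι ⊕ ι :=
  if x.elim id id ∈ S then x.swap else x

theorem swapSides_involutive (S : Set ι) : (swapSides S).Involutive := by
  rintro (i | i) <;> by_cases hi : i ∈ S <;> simp [swapSides, hi]

theorem isLeft_swapSides {c : ι ⊕ ι → Bool} (hc : ∀ x, c x.swap = !c x) (x : ι ⊕ ι) :
    (swapSides {i | c (.inl i) = false} x).isLeft = c x := by
  obtain i | i := x
  · cases h : c (.inl i) <;> simp [swapSides, h]
  · have hi : c (.inr i) = !c (.inl i) := hc (.inl i)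
    cases h : c (.inl i) <;> simp [swapSides, h, hi]

theorem exists_equiv_apply_inl_eq_inr {α β γ δ : Type*} (e : α ⊕ β ≃ γ ⊕ δ)
    (h : ∀ x, (e x).isRight = x.isLeft) : ∃ σ : α ≃ δ, ∀ i, e (.inl i) = .inr (σ i) := by
  let σ : α ≃ δ :=
    sumIsLeft.symm.trans ((e.subtypeEquiv fun x => by rw [h]).trans sumIsRight)
  exact ⟨σ, fun i => (Sum.inr_getRight _ _).symm⟩

theorem exists_straightening_of_fixed_point_free_involution_general (τ : Perm (ι ⊕ ι))
    (hinv : τ * τ = 1) (hfpf : τ ∈ derangements (ι ⊕ ι)) :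
    ∃ (S : Set ι) (σ : Perm ι), ∀ i, swapSides S (τ (swapSides S (.inl i))) = .inr (σ i) := by
  have swap_mul_swap : sumComm ι ι * sumComm ι ι = 1 := Perm.ext Sum.swap_swap
  have swap_mem_derangements : sumComm ι ι ∈ derangements (ι ⊕ ι) := by rintro (i | i) <;> simp
  obtain ⟨c, hcτ, hcswap⟩ :=
    exists_common_coloring hinv swap_mul_swap hfpf swap_mem_derangements
  let S : Set ι := {i | c (.inl i) = false}
  let θ : Perm (ι ⊕ ι) := (swapSides_involutive S).toPerm
  have isLeft_θ (x : ι ⊕ ι) : (θ x).isLeft = c x := isLeft_swapSides hcswap x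
  have isRight_conj (x : ι ⊕ ι) : (θ (τ (θ x))).isRight = x.isLeft := by
    rw [← Sum.bnot_isLeft, isLeft_θ, hcτ, Bool.not_not, ← isLeft_θ]
    exact congrArg Sum.isLeft (swapSides_involutive S x)
  exact ⟨S, exists_equiv_apply_inl_eq_inr (θ * τ * θ) isRight_conj⟩

end Sum

section Fin

variable (p : ℕ)

/-- The identification of two copies of `{1, …, p}` with the two halves of `{1, …, 2p}`. -/
def halvesEquiv : Fin p ⊕ Fin p ≃ Fin (2 * p) :=
  finSumFinEquiv.trans (finCongr (two_mul p).symm)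

theorem halvesEquiv_inl (i : Fin p) : halvesEquiv p (.inl i) = loIdx p i := rfl

theorem halvesEquiv_inr (i : Fin p) : halvesEquiv p (.inr i) = hiIdx p i := rfl

theorem swapHalves_halvesEquiv (S : Finset (Fin p)) (x : Fin p ⊕ Fin p) :
    swapHalves p S (halvesEquiv p x) = halvesEquiv p (swapSides S x) := by
  obtain i | i := x <;> by_cases hi : i ∈ S <;>
    simp [halvesEquiv_inl, halvesEquiv_inr, swapSides, swapHalves, loIdx, hiIdx, hi, add_comm]

end Fin

/-- **Every pairing can be straightened into a permutation.** For every fixed-point-free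
involution `τ` of `{1, …, 2p}` there are a subset `S ⊆ {1, …, p}` and a permutation `σ`
of `{1, …, p}` such that, with `θ` the product of the transpositions `(i, p+i)` for
`i ∈ S`, the involution `θ ∘ τ ∘ θ` maps `i` to `σ(i) + p` for every `i ∈ {1, …, p}`. -/
theorem exists_straightening_of_fixed_point_free_involution
    (p : ℕ) (hp : 1 ≤ p) (τ : Equiv.Perm (Fin (2 * p)))
    (hinv : τ * τ = 1) (hfpf : ∀ x, τ x ≠ x) :
    ∃ (S : Finset (Fin p)) (σ : Equiv.Perm (Fin p)),
      ∀ i : Fin p, swapHalves p S (τ (swapHalves p S (loIdx p i))) = hiIdx p (σ i) := by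
  let e := halvesEquiv p
  obtain ⟨S, σ, hσ⟩ := exists_straightening_of_fixed_point_free_involution_general
    (e.symm.permCongr τ) (by rw [← permCongr_mul, hinv]; exact map_one e.symm.permCongrHom)
    (e.symm.derangementsCongr ⟨τ, hfpf⟩).2
  lift S to Finset (Fin p) using S.toFinite
  refine ⟨S, σ, fun i => ?_⟩
  calc swapHalves p S (τ (swapHalves p S (loIdx p i)))
      = swapHalves p S (e (e.symm (τ (e (swapSides S (.inl i)))))) := by
        rw [← halvesEquiv_inl, swapHalves_halvesEquiv, e.apply_symm_apply]
    _ = e (.inr (σ i)) := by rw [swapHalves_halvesEquiv]; exact congrArg e (hσ i)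
end
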